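/- Fix n ≥ 4 and let H_n be the real linear span of the set of U-centered matrices Ã of Euclidean distance matrices A = (|x_i − x_j|) of n-point samples x₁,…,xₙ ∈ ℝ^p, over all dimensions p ≥ 1 and all samples. Then for every H ∈ H_n there exist points v₁,…,vₙ in a Euclidean space of dimension at most n−2 (in particular, one may take v₁,…,vₙ ∈ ℝ^{n−2}) such that the U-centered matrix of the Euclidean distance matrix (|v_i − v_j|) is exactly equal to H. -/

import Mathlib

/-- The U-centered matrix of an `n × n` real matrix `A`. -/
noncomputable def Ucenter {n : ℕ} (A : Matrix (Fin n) (Fin n) ℝ) :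
    Matrix (Fin n) (Fin n) ℝ :=
  Matrix.of fun i j =>
    if i = j then 0
    else A i j - (∑ l, A i l) / ((n : ℝ) - 2) - (∑ k, A k j) / ((n : ℝ) - 2)
      + (∑ k, ∑ l, A k l) / (((n : ℝ) - 1) * ((n : ℝ) - 2))

/-- The linear span of all U-centered distance matrices of `n`-point samples
in Euclidean spaces of all dimensions `p ≥ 1`. -/
noncomputable def Hn (n : ℕ) : Submodule ℝ (Matrix (Fin n) (Fin n) ℝ) :=
  Submodule.span ℝ {M | ∃ p : ℕ, 1 ≤ p ∧ ∃ x : Fin n → EuclideanSpace ℝ (Fin p),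
    M = Ucenter (Matrix.of fun i j => dist (x i) (x j))}

/-!
The proof is Cailliez's solution of the additive constant problem. U-centering annihilates the
matrix `J - I` whose off-diagonal entries are all `1` and fixes every `H ∈ Hn n`, so `H` is the
U-centered matrix of each `D c = H + c (J - I)`, and it suffices to find a `c` for which `D c` is a
Euclidean distance matrix. For `u ≠ 0` with zero sum, the form `q u c = -∑ D c i j ^ 2 * u i * u j`
is a quadratic polynomial in `c` with leading coefficient `∑ u i ^ 2 > 0`. Let `c` be the largest of
all roots of all the `q u`; it exists by compactness. Then `0 ≤ q u c` for every `u`, which is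
Schoenberg's criterion, and taking `u = e i - e j` gives `0 ≤ D c i j`. Since `c` is a root of some
`q w`, the Gram matrix of the configuration based at one of its points is annihilated by `w` as well
as by the base point, which saves the second dimension.
-/

open Matrix Module

section GramMatrix

variable {𝕜 E F ι : Type*} [RCLike 𝕜]
  [NormedAddCommGroup E] [InnerProductSpace 𝕜 E] [FiniteDimensional 𝕜 E]
  [NormedAddCommGroup F] [InnerProductSpace 𝕜 F]

lemma exists_linearIsometry_of_finrank_le [FiniteDimensional 𝕜 F] (h : finrank 𝕜 F ≤ finrank 𝕜 E) :
    Nonempty (F →ₗᵢ[𝕜] E) := by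
  let b := stdOrthonormalBasis 𝕜 F
  let b' := stdOrthonormalBasis 𝕜 E
  let f : F →ₗ[𝕜] E := b.toBasis.constr 𝕜 (b' ∘ Fin.castLE h)
  have hf : f ∘ b.toBasis = b' ∘ Fin.castLE h :=
    funext fun i => b.toBasis.constr_basis 𝕜 _ i
  refine ⟨f.isometryOfOrthonormal (v := b.toBasis) (by simp [b.orthonormal]) ?_⟩
  rw [hf]
  exact b'.orthonormal.comp _ (Fin.castLE_injective h)

lemma exists_gram_eq_gram_of_finrank_span_le [Finite ι] (b : ι → F)
    (h : finrank 𝕜 (Submodule.span 𝕜 (Set.range b)) ≤ finrank 𝕜 E) :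
    ∃ v : ι → E, gram 𝕜 v = gram 𝕜 b := by
  have := FiniteDimensional.span_of_finite 𝕜 (Set.finite_range b)
  obtain ⟨g⟩ := exists_linearIsometry_of_finrank_le h
  refine ⟨fun i => g ⟨b i, Submodule.subset_span ⟨i, rfl⟩⟩, ?_⟩
  ext i j
  rw [gram_apply, g.inner_map_map, Submodule.coe_inner, gram_apply]

open scoped ComplexOrder MatrixOrder in
lemma exists_gram_eq_of_posSemidef [Fintype ι] {G : Matrix ι ι 𝕜} (hG : G.PosSemidef)
    (hrank : G.rank ≤ finrank 𝕜 E) : ∃ v : ι → E, gram 𝕜 v = G := by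
  classical
  obtain ⟨B, hB⟩ := CStarAlgebra.nonneg_iff_eq_star_mul_self.mp hG.nonneg
  let b (i : ι) : EuclideanSpace 𝕜 ι := WithLp.toLp 2 (B.col i)
  have hb : gram 𝕜 b = G := by
    ext i j
    simp [b, hB, PiLp.inner_apply, mul_apply, star_apply, mul_comm]
  have hspan : finrank 𝕜 (Submodule.span 𝕜 (Set.range b)) = G.rank := by
    rw [hB, star_eq_conjTranspose, rank_conjTranspose_mul_self, rank_eq_finrank_span_cols,
      ← (WithLp.linearEquiv 2 𝕜 (ι → 𝕜)).symm.finrank_map_eq, Submodule.map_span, ← Set.range_comp]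
    rfl
  obtain ⟨v, hv⟩ := exists_gram_eq_gram_of_finrank_span_le b (hspan.trans_le hrank)
  exact ⟨v, hv.trans hb⟩

end GramMatrix

lemma rank_add_card_le_of_linearIndependent {K m n κ : Type*} [Field K] [Fintype n] [Fintype κ]
    {A : Matrix m n K} {v : κ → n → K} (hv : LinearIndependent K v) (hA : ∀ k, A *ᵥ v k = 0) :
    A.rank + Fintype.card κ ≤ Fintype.card n := by
  have hspan : Submodule.span K (Set.range v) ≤ A.mulVecLin.ker :=
    Submodule.span_le.2 (Set.range_subset_iff.2 hA)
  calc A.rank + Fintype.card κ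
      = A.rank + finrank K (Submodule.span K (Set.range v)) := by rw [finrank_span_eq_card hv]
    _ ≤ A.rank + finrank K A.mulVecLin.ker := by gcongr; exact Submodule.finrank_mono hspan
    _ = Fintype.card n := by
      rw [rank, LinearMap.finrank_range_add_finrank_ker, finrank_fintype_fun_eq_card]

section Schoenberg

variable {ι : Type*} {S : Matrix ι ι ℝ} {o : ι} {u w : ι → ℝ}

/-- The Gram matrix of a configuration with squared distances `S` whose point `o` is placed at the
origin, given by polarization: `⟪x, y⟫ = (‖x‖ ^ 2 + ‖y‖ ^ 2 - ‖x - y‖ ^ 2) / 2`. -/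
noncomputable def basedGram (S : Matrix ι ι ℝ) (o : ι) : Matrix ι ι ℝ :=
  (2⁻¹ : ℝ) • (vecMulVec (S.col o) 1 + vecMulVec 1 (S.row o) - S)

lemma basedGram_apply (S : Matrix ι ι ℝ) (o i j : ι) :
    basedGram S o i j = (S i o + S o j - S i j) / 2 := by
  simp only [basedGram, vecMulVec_one, one_vecMulVec, Matrix.smul_apply, Matrix.sub_apply,
    Matrix.add_apply, replicateCol_apply, col_apply, replicateRow_apply, row_apply, smul_eq_mul]
  ring

lemma isSymm_basedGram (hS : S.IsSymm) (o : ι) : (basedGram S o).IsSymm := by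
  ext i j
  simp only [transpose_apply, basedGram_apply, hS.apply]
  ring

variable [Fintype ι]

/-- Conditional negative semidefiniteness: the quadratic form of `S` is nonpositive on vectors with
zero sum. This is Schoenberg's criterion for `S` to be a matrix of squared Euclidean distances. -/
def IsCondNegSemidef (S : Matrix ι ι ℝ) : Prop :=
  ∀ u : ι → ℝ, ∑ i, u i = 0 → u ⬝ᵥ S *ᵥ u ≤ 0

lemma basedGram_mulVec_single [DecidableEq ι] (ho : S o o = 0) :
    basedGram S o *ᵥ Pi.single o 1 = 0 := by
  ext i
  simp [basedGram_apply, ho]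

lemma dotProduct_basedGram_mulVec (hu : ∑ i, u i = 0) :
    u ⬝ᵥ basedGram S o *ᵥ u = -(u ⬝ᵥ S *ᵥ u) / 2 := by
  simp only [basedGram, smul_mulVec, sub_mulVec, add_mulVec, vecMulVec_mulVec, one_dotProduct, hu,
    MulOpposite.op_zero, zero_smul, op_smul_eq_smul, zero_add, dotProduct_smul, dotProduct_sub,
    dotProduct_one, smul_eq_mul, mul_zero, zero_sub, mul_neg]
  ring

lemma posSemidef_basedGram (hS : S.IsSymm) (ho : S o o = 0) (hneg : IsCondNegSemidef S) :
    (basedGram S o).PosSemidef := by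
  classical
  refine .of_dotProduct_mulVec_nonneg (isSymm_basedGram hS o) fun x => ?_
  set e : ι → ℝ := Pi.single o 1
  set u := x - (∑ i, x i) • e
  have hx : x = u + (∑ i, x i) • e := by simp [u]
  have hu : ∑ i, u i = 0 := by simp [u, e, ← Finset.mul_sum]
  have hGe : basedGram S o *ᵥ e = 0 := basedGram_mulVec_single ho
  have heG : e ᵥ* basedGram S o = 0 := by
    rw [← mulVec_transpose, isSymm_basedGram hS o, hGe]
  have hGx : star x ⬝ᵥ basedGram S o *ᵥ x = u ⬝ᵥ basedGram S o *ᵥ u := by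
    rw [star_trivial, hx]
    simp [mulVec_add, mulVec_smul, dotProduct_mulVec, add_vecMul, smul_vecMul, hGe, heG]
  rw [hGx, dotProduct_basedGram_mulVec hu]
  linarith [hneg u hu]

lemma rank_basedGram_add_two_le (hS : S.IsSymm) (ho : S o o = 0) (hneg : IsCondNegSemidef S)
    (hw₀ : w ≠ 0) (hw : ∑ i, w i = 0) (hSw : w ⬝ᵥ S *ᵥ w = 0) :
    (basedGram S o).rank + 2 ≤ Fintype.card ι := by
  classical
  have hGw : basedGram S o *ᵥ w = 0 := by
    rw [← (posSemidef_basedGram hS ho hneg).dotProduct_mulVec_zero_iff, star_trivial,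
      dotProduct_basedGram_mulVec hw, hSw, neg_zero, zero_div]
  have hli : LinearIndependent ℝ ![w, Pi.single o 1] := by
    refine LinearIndependent.pair_iff.2 fun s t hst => ?_
    have ht : t = 0 := by
      simpa [Finset.sum_add_distrib, ← Finset.mul_sum, hw] using
        congrArg (fun x : ι → ℝ => ∑ i, x i) hst
    exact ⟨by simpa [ht, hw₀] using hst, ht⟩
  refine rank_add_card_le_of_linearIndependent hli fun k => ?_
  fin_cases k
  exacts [hGw, basedGram_mulVec_single ho]

lemma exists_dist_sq_eq_of_isCondNegSemidef {E : Type*} [NormedAddCommGroup E]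
    [InnerProductSpace ℝ E] [FiniteDimensional ℝ E] (hE : Fintype.card ι ≤ finrank ℝ E + 2)
    (hS : S.IsSymm) (hdiag : ∀ i, S i i = 0) (hneg : IsCondNegSemidef S)
    (hw₀ : w ≠ 0) (hw : ∑ i, w i = 0) (hSw : w ⬝ᵥ S *ᵥ w = 0) :
    ∃ v : ι → E, ∀ i j, dist (v i) (v j) ^ 2 = S i j := by
  obtain ⟨o, -⟩ := Function.ne_iff.1 hw₀
  have hrank := rank_basedGram_add_two_le hS (hdiag o) hneg hw₀ hw hSw
  obtain ⟨v, hv⟩ := exists_gram_eq_of_posSemidef (E := E)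
    (posSemidef_basedGram hS (hdiag o) hneg) (by omega)
  have hinner (i j : ι) : inner ℝ (v i) (v j) = (S i o + S o j - S i j) / 2 := by
    rw [← gram_apply, hv, basedGram_apply]
  refine ⟨v, fun i j => ?_⟩
  rw [dist_eq_norm, norm_sub_sq_real, ← real_inner_self_eq_norm_sq, ← real_inner_self_eq_norm_sq]
  simp only [hinner, hdiag, hS.apply o]
  ring

end Schoenberg

section Quadratic

lemma quadratic_nonneg_of_forall_root_le {a b c x₀ : ℝ} (ha : 0 < a)
    (h : ∀ x, a * (x * x) + b * x + c = 0 → x ≤ x₀) : 0 ≤ a * (x₀ * x₀) + b * x₀ + c := by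
  by_contra! hneg
  have hdiscrim : (2 * a * x₀ + b) ^ 2 < discrim a b c := by
    rw [discrim]
    nlinarith
  have hroot : (-b + √(discrim a b c)) / (2 * a) ≤ x₀ := by
    refine h _ ((quadratic_eq_zero_iff ha.ne' ?_ _).2 (.inl rfl))
    rw [Real.mul_self_sqrt ((sq_nonneg _).trans hdiscrim.le)]
  rw [div_le_iff₀ (by positivity)] at hroot
  linarith [Real.lt_sqrt_of_sq_lt hdiscrim]

lemma exists_isGreatest_quadratic_root {X : Type*} [TopologicalSpace X] {K : Set X}
    (hK : IsCompact K) {a b c : X → ℝ} (ha : ContinuousOn a K) (hb : ContinuousOn b K)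
    (hc : ContinuousOn c K) (ha₀ : ∀ u ∈ K, 0 < a u)
    (hne : ∃ x, ∃ u ∈ K, a u * (x * x) + b u * x + c u = 0) :
    ∃ x₀, IsGreatest {x | ∃ u ∈ K, a u * (x * x) + b u * x + c u = 0} x₀ := by
  let Δ u := discrim (a u) (b u) (c u)
  let r u := (-b u + √(Δ u)) / (2 * a u)
  have hΔ : ContinuousOn Δ K := by unfold Δ discrim; fun_prop
  have hr : ContinuousOn r K :=
    (hb.neg.add hΔ.sqrt).div (by fun_prop) fun u hu => by linarith [ha₀ u hu]
  have hroot {x u} (hu : u ∈ K) (hx : a u * (x * x) + b u * x + c u = 0) : 0 ≤ Δ u ∧ x ≤ r u := by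
    rw [quadratic_eq_zero_iff_discrim_eq_sq (ha₀ u hu).ne'] at hx
    refine ⟨(sq_nonneg _).trans_eq hx.symm, ?_⟩
    rw [le_div_iff₀ (by linarith [ha₀ u hu])]
    linarith [Real.le_sqrt_of_sq_le hx.ge]
  have hK' : IsCompact (K ∩ Δ ⁻¹' Set.Ici 0) := by
    obtain ⟨T, hT, hTK⟩ := continuousOn_iff_isClosed.1 hΔ _ isClosed_Ici
    rw [Set.inter_comm, hTK, Set.inter_comm]
    exact hK.inter_right hT
  obtain ⟨x₁, u₁, hu₁, hx₁⟩ := hne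
  obtain ⟨u₀, ⟨hu₀, hΔ₀⟩, hmax⟩ := hK'.exists_isMaxOn ⟨u₁, hu₁, (hroot hu₁ hx₁).1⟩
    (hr.mono Set.inter_subset_left)
  refine ⟨r u₀, ⟨u₀, hu₀, ?_⟩, ?_⟩
  · exact (quadratic_eq_zero_iff (ha₀ u₀ hu₀).ne' (Real.mul_self_sqrt hΔ₀).symm _).2 (.inl rfl)
  · rintro x ⟨u, hu, hx⟩
    exact (hroot hu hx).2.trans (hmax ⟨hu, (hroot hu hx).1⟩)

end Quadratic

section AdditiveConstant

variable {ι : Type*} [DecidableEq ι] {A : Matrix ι ι ℝ} {u : ι → ℝ}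

/-- The matrix `A + c (J - I)`, where `J` is the all-ones matrix; for `A` with zero diagonal this is
the dissimilarity matrix `A` shifted by an additive constant. -/
def addOffDiag (A : Matrix ι ι ℝ) (c : ℝ) : Matrix ι ι ℝ :=
  A + c • (of 1 - 1)

lemma addOffDiag_apply (A : Matrix ι ι ℝ) (c : ℝ) (i j : ι) :
    addOffDiag A c i j = A i j + if i = j then 0 else c := by
  by_cases h : i = j <;> simp [addOffDiag, h]

lemma isSymm_addOffDiag (hA : A.IsSymm) (c : ℝ) : (addOffDiag A c).IsSymm := by
  ext i j
  simp [addOffDiag_apply, hA.apply i j, eq_comm]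

lemma addOffDiag_hadamard_self (hdiag : ∀ i, A i i = 0) (c : ℝ) :
    addOffDiag A c ⊙ addOffDiag A c = A ⊙ A + (2 * c) • A + (c * c) • (of 1 - 1) := by
  ext i j
  by_cases h : i = j
  · simp [addOffDiag_apply, h, hdiag]
  · simp only [hadamard_apply, addOffDiag_apply, h, ↓reduceIte, Matrix.add_apply,
      Matrix.smul_apply, smul_eq_mul, Matrix.sub_apply, of_apply, Pi.one_apply, ne_eq,
      not_false_eq_true, one_apply_ne, sub_zero, mul_one]
    ring

variable [Fintype ι]

lemma dotProduct_addOffDiag_hadamard_self_mulVec (hdiag : ∀ i, A i i = 0) (hu : ∑ i, u i = 0)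
    (c : ℝ) : u ⬝ᵥ (addOffDiag A c ⊙ addOffDiag A c) *ᵥ u =
      -((u ⬝ᵥ u) * (c * c) + -2 * (u ⬝ᵥ A *ᵥ u) * c + -(u ⬝ᵥ (A ⊙ A) *ᵥ u)) := by
  have hones : (of 1 : Matrix ι ι ℝ) *ᵥ u = 0 := by
    ext i
    simp [mulVec, dotProduct, hu]
  simp only [addOffDiag_hadamard_self hdiag, add_mulVec, smul_mulVec, sub_mulVec, hones,
    one_mulVec, zero_sub, smul_neg, dotProduct_add, dotProduct_smul, smul_eq_mul, dotProduct_neg,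
    neg_mul, neg_add_rev, neg_neg]
  ring

/-- The constants `c` for which the squared entries of `A + c (J - I)` form a matrix whose quadratic
form vanishes at some nonzero vector with zero sum. -/
def degenerateConstants (A : Matrix ι ι ℝ) : Set ℝ :=
  {c | ∃ u : ι → ℝ, u ≠ 0 ∧ ∑ i, u i = 0 ∧ u ⬝ᵥ (addOffDiag A c ⊙ addOffDiag A c) *ᵥ u = 0}

lemma neg_apply_mem_degenerateConstants (hA : A.IsSymm) (hdiag : ∀ i, A i i = 0) {i j : ι}
    (hij : i ≠ j) : -A i j ∈ degenerateConstants A := by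
  refine ⟨Pi.single i 1 - Pi.single j 1, ?_, by simp, ?_⟩
  · exact fun h => by simpa [hij] using congrFun h i
  · simp [mulVec_sub, sub_dotProduct, addOffDiag_apply, hij, hij.symm, hdiag, hA.apply i j]

lemma mem_degenerateConstants_iff_exists_norm_eq_one (hdiag : ∀ i, A i i = 0) {c : ℝ} :
    c ∈ degenerateConstants A ↔ ∃ u ∈ Metric.sphere (0 : ι → ℝ) 1 ∩ {u | ∑ i, u i = 0},
      (u ⬝ᵥ u) * (c * c) + -2 * (u ⬝ᵥ A *ᵥ u) * c + -(u ⬝ᵥ (A ⊙ A) *ᵥ u) = 0 := by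
  constructor
  · rintro ⟨u, hu₀, hu, hform⟩
    rw [dotProduct_addOffDiag_hadamard_self_mulVec hdiag hu, neg_eq_zero] at hform
    refine ⟨‖u‖⁻¹ • u, ⟨?_, ?_⟩, ?_⟩
    · simp [norm_smul, hu₀]
    · simp [← Finset.mul_sum, hu]
    · simp only [mulVec_smul, smul_dotProduct, dotProduct_smul, smul_eq_mul]
      linear_combination ‖u‖⁻¹ ^ 2 * hform
  · rintro ⟨u, ⟨hu₁, hu⟩, hform⟩
    refine ⟨u, Metric.ne_of_mem_sphere hu₁ one_ne_zero, hu, ?_⟩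
    rw [dotProduct_addOffDiag_hadamard_self_mulVec hdiag hu, hform, neg_zero]

lemma exists_isGreatest_degenerateConstants [Nontrivial ι] (hA : A.IsSymm)
    (hdiag : ∀ i, A i i = 0) : ∃ c, IsGreatest (degenerateConstants A) c := by
  obtain ⟨i, j, hij⟩ := exists_pair_ne ι
  have hroot (c : ℝ) := mem_degenerateConstants_iff_exists_norm_eq_one hdiag (c := c)
  have hK : IsCompact (Metric.sphere (0 : ι → ℝ) 1 ∩ {u | ∑ i, u i = 0}) :=
    (isCompact_sphere 0 1).inter_right (isClosed_eq (by fun_prop) continuous_const)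
  have hpos : ∀ u ∈ Metric.sphere (0 : ι → ℝ) 1 ∩ {u | ∑ i, u i = 0}, 0 < u ⬝ᵥ u :=
    fun u hu => dotProduct_star_self_pos_iff.2 (Metric.ne_of_mem_sphere hu.1 one_ne_zero)
  rw [Set.ext hroot]
  exact exists_isGreatest_quadratic_root hK (by fun_prop) (by fun_prop) (by fun_prop) hpos
    ⟨_, (hroot _).1 (neg_apply_mem_degenerateConstants hA hdiag hij)⟩

lemma isCondNegSemidef_of_mem_upperBounds_degenerateConstants (hdiag : ∀ i, A i i = 0) {c : ℝ}
    (hc : c ∈ upperBounds (degenerateConstants A)) :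
    IsCondNegSemidef (addOffDiag A c ⊙ addOffDiag A c) := by
  intro u hu
  rcases eq_or_ne u 0 with rfl | hu₀
  · simp
  rw [dotProduct_addOffDiag_hadamard_self_mulVec hdiag hu, neg_nonpos]
  refine quadratic_nonneg_of_forall_root_le (dotProduct_star_self_pos_iff.2 hu₀) fun x hx => ?_
  refine hc ⟨u, hu₀, hu, ?_⟩
  rw [dotProduct_addOffDiag_hadamard_self_mulVec hdiag hu, hx, neg_zero]

lemma addOffDiag_nonneg_of_mem_upperBounds_degenerateConstants (hA : A.IsSymm)
    (hdiag : ∀ i, A i i = 0) {c : ℝ} (hc : c ∈ upperBounds (degenerateConstants A)) (i j : ι) :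
    0 ≤ addOffDiag A c i j := by
  rcases eq_or_ne i j with rfl | hij
  · simp [addOffDiag_apply, hdiag]
  · have := hc (neg_apply_mem_degenerateConstants hA hdiag hij)
    simp only [addOffDiag_apply, hij, if_false]
    linarith

/-- Cailliez's theorem on the additive constant problem. -/
theorem exists_dist_eq_addOffDiag [Nontrivial ι] {E : Type*} [NormedAddCommGroup E]
    [InnerProductSpace ℝ E] [FiniteDimensional ℝ E] (hE : Fintype.card ι ≤ finrank ℝ E + 2)
    (hA : A.IsSymm) (hdiag : ∀ i, A i i = 0) :
    ∃ (c : ℝ) (v : ι → E), of (fun i j => dist (v i) (v j)) = addOffDiag A c := by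
  obtain ⟨c, ⟨w, hw₀, hw, hform⟩, hc⟩ := exists_isGreatest_degenerateConstants hA hdiag
  have hsymm := isSymm_addOffDiag hA c
  obtain ⟨v, hv⟩ := exists_dist_sq_eq_of_isCondNegSemidef hE
    (S := addOffDiag A c ⊙ addOffDiag A c)
    (by ext i j; simp [hsymm.apply i j]) (by simp [addOffDiag_apply, hdiag])
    (isCondNegSemidef_of_mem_upperBounds_degenerateConstants hdiag hc) hw₀ hw hform
  refine ⟨c, v, ext fun i j => ?_⟩
  have hnonneg := addOffDiag_nonneg_of_mem_upperBounds_degenerateConstants hA hdiag hc i j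
  rw [of_apply, ← sq_eq_sq₀ dist_nonneg hnonneg, hv, hadamard_apply, sq]

end AdditiveConstant

section UCentering

lemma sum_col_eq_sum_row_of_isSymm {ι α : Type*} [Fintype ι] [AddCommMonoid α] {M : Matrix ι ι α}
    (hM : M.IsSymm) (j : ι) : ∑ i, M i j = ∑ i, M j i :=
  Finset.sum_congr rfl fun i _ => hM.apply j i

variable {n : ℕ} {A : Matrix (Fin n) (Fin n) ℝ}

lemma Ucenter_apply_self (A : Matrix (Fin n) (Fin n) ℝ) (i : Fin n) : Ucenter A i i = 0 := by
  simp [Ucenter]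

lemma Ucenter_apply_of_ne {i j : Fin n} (hij : i ≠ j) :
    Ucenter A i j = A i j - (∑ l, A i l) / ((n : ℝ) - 2) - (∑ k, A k j) / ((n : ℝ) - 2)
      + (∑ k, ∑ l, A k l) / (((n : ℝ) - 1) * ((n : ℝ) - 2)) := by
  simp [Ucenter, hij]

lemma isSymm_Ucenter (hA : A.IsSymm) : (Ucenter A).IsSymm := by
  ext i j
  rcases eq_or_ne i j with rfl | hij
  · rfl
  · simp only [transpose_apply, Ucenter_apply_of_ne hij, Ucenter_apply_of_ne hij.symm,
      sum_col_eq_sum_row_of_isSymm hA, hA.apply i j]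
    ring

lemma sum_Ucenter_row (hn : 3 ≤ n) (hA : A.IsSymm) (hdiag : ∀ i, A i i = 0) (i : Fin n) :
    ∑ j, Ucenter A i j = 0 := by
  have hn' : (3 : ℝ) ≤ n := by exact_mod_cast hn
  have h₁ : (n : ℝ) - 1 ≠ 0 := by linarith
  have h₂ : (n : ℝ) - 2 ≠ 0 := by linarith
  rw [← Finset.add_sum_erase _ _ (Finset.mem_univ i), Ucenter_apply_self, zero_add,
    Finset.sum_congr rfl fun j hj => Ucenter_apply_of_ne (Finset.ne_of_mem_erase hj).symm]
  simp only [sum_col_eq_sum_row_of_isSymm hA, Finset.sum_erase_eq_sub (Finset.mem_univ i), hdiag,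
    Finset.sum_add_distrib, Finset.sum_sub_distrib, ← Finset.sum_div, Finset.sum_const,
    Finset.card_univ, Fintype.card_fin, nsmul_eq_mul]
  field_simp
  ring

lemma Ucenter_eq_self (hA : A.IsSymm) (hdiag : ∀ i, A i i = 0) (hrow : ∀ i, ∑ j, A i j = 0) :
    Ucenter A = A := by
  ext i j
  rcases eq_or_ne i j with rfl | hij
  · rw [Ucenter_apply_self, hdiag]
  · simp [Ucenter_apply_of_ne hij, hrow, sum_col_eq_sum_row_of_isSymm hA]

lemma Ucenter_addOffDiag (hn : 3 ≤ n) (A : Matrix (Fin n) (Fin n) ℝ) (c : ℝ) :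
    Ucenter (addOffDiag A c) = Ucenter A := by
  have hn' : (3 : ℝ) ≤ n := by exact_mod_cast hn
  have h₁ : (n : ℝ) - 1 ≠ 0 := by linarith
  have h₂ : (n : ℝ) - 2 ≠ 0 := by linarith
  have hoff (i j : Fin n) : addOffDiag A c i j = A i j + (c - if i = j then c else 0) := by
    by_cases h : i = j <;> simp [addOffDiag_apply, h]
  ext i j
  rcases eq_or_ne i j with rfl | hij
  · simp only [Ucenter_apply_self]
  · simp only [Ucenter_apply_of_ne hij, hoff, hij, if_false, Finset.sum_add_distrib,
      Finset.sum_sub_distrib, Finset.sum_ite_eq, Finset.sum_ite_eq', Finset.mem_univ, if_true,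
      Finset.sum_const, Finset.card_univ, Fintype.card_fin, nsmul_eq_mul]
    field_simp
    ring

/-- The space of symmetric matrices with zero diagonal and zero row sums, the fixed points of
U-centering among symmetric matrices (for `3 ≤ n`). -/
def ucenteredSubmodule (n : ℕ) : Submodule ℝ (Matrix (Fin n) (Fin n) ℝ) where
  carrier := {H | H.IsSymm ∧ (∀ i, H i i = 0) ∧ ∀ i, ∑ j, H i j = 0}
  zero_mem' := by simp
  add_mem' hA hB := ⟨hA.1.add hB.1, by simp [hA.2.1, hB.2.1],
    by simp [Finset.sum_add_distrib, hA.2.2, hB.2.2]⟩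
  smul_mem' c _ hA := ⟨hA.1.smul c, by simp [hA.2.1], by simp [← Finset.mul_sum, hA.2.2]⟩

lemma Ucenter_mem_ucenteredSubmodule (hn : 3 ≤ n) (hA : A.IsSymm) (hdiag : ∀ i, A i i = 0) :
    Ucenter A ∈ ucenteredSubmodule n :=
  ⟨isSymm_Ucenter hA, Ucenter_apply_self A, sum_Ucenter_row hn hA hdiag⟩

lemma Hn_le_ucenteredSubmodule (hn : 3 ≤ n) : Hn n ≤ ucenteredSubmodule n := by
  refine Submodule.span_le.2 ?_
  rintro _ ⟨p, -, x, rfl⟩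
  exact Ucenter_mem_ucenteredSubmodule hn (ext fun i j => dist_comm (x j) (x i))
    fun i => dist_self (x i)

end UCentering

/-- Every element of the Hilbert space `H_n` is the U-centered distance matrix of
some sample of `n` points in a Euclidean space of dimension at most `n − 2`. -/
theorem Hn_euclidean_representation {n : ℕ} (hn : 4 ≤ n)
    (H : Matrix (Fin n) (Fin n) ℝ) (hH : H ∈ Hn n) :
    ∃ v : Fin n → EuclideanSpace ℝ (Fin (n - 2)),
      Ucenter (Matrix.of fun i j => dist (v i) (v j)) = H := by
  have hn₃ : 3 ≤ n := by lia
  have : Nontrivial (Fin n) := Fin.nontrivial_iff_two_le.2 (by lia)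
  obtain ⟨hsymm, hdiag, hrow⟩ := Hn_le_ucenteredSubmodule hn₃ hH
  obtain ⟨c, v, hv⟩ := exists_dist_eq_addOffDiag (E := EuclideanSpace ℝ (Fin (n - 2)))
    (by rw [Fintype.card_fin, finrank_euclideanSpace_fin]; lia) hsymm hdiag
  exact ⟨v, by rw [hv, Ucenter_addOffDiag hn₃, Ucenter_eq_self hsymm hdiag hrow]⟩
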